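/- Let [a_1,…,a_r] be a T-chain with Hirzebruch–Jung value n/q, and suppose that for some s with 1 ≤ s < r one has a_1 = ⋯ = a_s = 2 and a_{s+1} > 2. Then β(n/q) + s ≤ r, and consequently a_{s+1} + ⋯ + a_r = 3r + 2 − β(n/q) − 2s ≥ r + β(n/q) + 2 ≥ 5. -/

import Mathlib

/-- Hirzebruch–Jung continued fraction: `hj [b] = b`, `hj (b :: l) = b - 1 / hj l`. -/
def hj : List ℚ → ℚ
  | [] => 0
  | b :: l => b - 1 / hj l

/-- `g = gcd(n, q+1)`. -/
def Tg (n q : ℕ) : ℕ := Nat.gcd n (q + 1)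

/-- `β(n/q) = gcd(n, q+1)² / n ∈ ℚ`. -/
def Tbeta (n q : ℕ) : ℚ := (Tg n q : ℚ) ^ 2 / (n : ℚ)

/-- `n/q` (with `n > q ≥ 1` coprime) is a T-fraction if `n ∣ (q+1)²` and `q ≠ n-1`. -/
def IsTFraction (n q : ℕ) : Prop :=
  1 ≤ q ∧ q < n ∧ Nat.Coprime n q ∧ n ∣ (q + 1) ^ 2 ∧ q ≠ n - 1

/-!
A T-fraction is `βm² / (βma - 1)` with `β = β(n/q)` and `0 < a < m` coprime. Writing `m = a + b`,
the subtractive Euclidean algorithm brings the coprime pair `(a, b)` down to `(1, 1)`. On the level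
of chains its two steps undo the Kollár–Shepherd-Barron moves
`[c₁, …, cᵣ] ↦ [2, c₁, …, cᵣ + 1]` and `[c₁, …, cᵣ] ↦ [c₁ + 1, …, cᵣ, 2]`, and `(1, 1)` corresponds
to `[4]` for `β = 1` and to `[3, 2, …, 2, 3]`, of length `β`, otherwise. Since a chain with entries
at least `2` is determined by its value, every T-chain arises in this way. Each move adds `1` to the
length and `3` to the sum, and it lengthens the initial run of `2`s by at most `1`, so that at least
`β` entries follow that run.
-/

section HirzebruchJung

variable {l : List ℚ}

lemma one_lt_hj_cons {b : ℚ} (hb : 2 ≤ b) (hl : (hj l)⁻¹ < 1) : 1 < hj (b :: l) := by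
  rw [hj, one_div]
  linarith

lemma inv_hj_mem_Ico (h : ∀ b ∈ l, 2 ≤ b) : (hj l)⁻¹ ∈ Set.Ico 0 1 := by
  induction l with
  | nil => simp [hj]
  | cons b l ih =>
    rw [List.forall_mem_cons] at h
    have one_lt : 1 < hj (b :: l) := one_lt_hj_cons h.1 (ih h.2).2
    exact ⟨by positivity, inv_lt_one_of_one_lt₀ one_lt⟩

lemma hj_cons_pos {b : ℚ} (h : ∀ c ∈ b :: l, 2 ≤ c) : 0 < hj (b :: l) := by
  rw [List.forall_mem_cons] at h
  exact zero_lt_one.trans (one_lt_hj_cons h.1 (inv_hj_mem_Ico h.2).2)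

lemma ceil_hj_cons (b : ℤ) (h : ∀ c ∈ l, 2 ≤ c) : ⌈hj (b :: l)⌉ = b := by
  obtain ⟨hnonneg, hlt⟩ := inv_hj_mem_Ico h
  rw [Int.ceil_eq_iff, hj, one_div]
  constructor <;> linarith

lemma two_le_of_mem_map_intCast {L : List ℤ} (h : ∀ b ∈ L, 2 ≤ b) :
    ∀ c ∈ L.map ((↑) : ℤ → ℚ), 2 ≤ c :=
  List.forall_mem_map.2 fun b hb ↦ mod_cast h b hb

lemma hj_map_intCast_injOn :
    Set.InjOn (fun L : List ℤ ↦ hj (L.map (↑))) {L | ∀ b ∈ L, 2 ≤ b} := by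
  intro L hL L' hL' hval
  induction L generalizing L' with
  | nil =>
    cases L' with
    | nil => rfl
    | cons b' L' => exact absurd hval (hj_cons_pos (two_le_of_mem_map_intCast hL')).ne
  | cons b L ih =>
    cases L' with
    | nil => exact absurd hval (hj_cons_pos (two_le_of_mem_map_intCast hL)).ne'
    | cons b' L' =>
      simp only [Set.mem_ofPred_eq, List.forall_mem_cons, List.map_cons] at hL hL' hval
      obtain rfl : b = b' := by
        rw [← ceil_hj_cons b (two_le_of_mem_map_intCast hL.2), hval,
          ceil_hj_cons b' (two_le_of_mem_map_intCast hL'.2)]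
      have htail : hj (L.map (↑)) = hj (L'.map (↑)) := by simpa [hj] using hval
      rw [ih hL.2 hL'.2 htail]

/-- The continuant matrix `∏ᵢ !![bᵢ, -1; 1, 0]` of `[b₁, …, bᵣ]`: its first column holds the
numerator and the denominator of the continued fraction. -/
def hjMatrix (l : List ℚ) : Matrix (Fin 2) (Fin 2) ℚ :=
  (l.map fun b ↦ !![b, -1; 1, 0]).prod

lemma hjMatrix_nil : hjMatrix [] = !![1, 0; 0, 1] := by
  simp [hjMatrix, Matrix.one_fin_two]

lemma hjMatrix_cons (b : ℚ) (l : List ℚ) : hjMatrix (b :: l) = !![b, -1; 1, 0] * hjMatrix l := by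
  simp [hjMatrix]

lemma hjMatrix_append (l l' : List ℚ) : hjMatrix (l ++ l') = hjMatrix l * hjMatrix l' := by
  simp [hjMatrix]

lemma hjMatrix_singleton (b : ℚ) : hjMatrix [b] = !![b, -1; 1, 0] := by
  simp [hjMatrix]

lemma hjMatrix_replicate_two (k : ℕ) :
    hjMatrix (List.replicate k 2) = !![(k + 1 : ℚ), -k; k, 1 - k] := by
  induction k with
  | zero => simp [hjMatrix_nil]
  | succ k ih =>
    rw [List.replicate_succ, hjMatrix_cons, ih, Matrix.mul_fin_two]
    ext i j
    fin_cases i <;> fin_cases j <;> simp <;> ring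

lemma hjMatrix_add_one_cons (x : ℚ) (l : List ℚ) :
    hjMatrix ((x + 1) :: l) = !![1, 1; 0, 1] * hjMatrix (x :: l) := by
  rw [hjMatrix_cons, hjMatrix_cons, ← mul_assoc]
  simp

lemma hjMatrix_concat_add_one (l : List ℚ) (x : ℚ) :
    hjMatrix (l ++ [x + 1]) = hjMatrix (l ++ [x]) * !![1, 0; -1, 1] := by
  rw [hjMatrix_append, hjMatrix_append, mul_assoc, hjMatrix_singleton, hjMatrix_singleton]
  simp

lemma inv_hj_mul_hjMatrix (h : ∀ b ∈ l, 2 ≤ b) :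
    (hj l)⁻¹ * hjMatrix l 0 0 = hjMatrix l 1 0 := by
  induction l with
  | nil => simp [hj, hjMatrix_nil]
  | cons b l ih =>
    have hpos : 0 < hj (b :: l) := hj_cons_pos h
    have hnum : hjMatrix (b :: l) 0 0 = b * hjMatrix l 0 0 - hjMatrix l 1 0 := by
      simp [hjMatrix_cons, Matrix.mul_apply, sub_eq_add_neg]
    have hden : hjMatrix (b :: l) 1 0 = hjMatrix l 0 0 := by
      simp [hjMatrix_cons, Matrix.mul_apply]
    rw [hnum, hden, inv_mul_eq_iff_eq_mul₀ hpos.ne', ← ih (List.forall_mem_cons.1 h).2, hj]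
    ring

lemma hj_eq_hjMatrix_div (h : ∀ b ∈ l, 2 ≤ b) (hnum : hjMatrix l 0 0 ≠ 0) :
    hj l = hjMatrix l 0 0 / hjMatrix l 1 0 := by
  rw [← inv_hj_mul_hjMatrix h, div_mul_cancel_right₀ hnum, inv_inv]

end HirzebruchJung

/-- The chains produced by the Kollár–Shepherd-Barron algorithm. The indices `β`, `a`, `b` record
the value `β(a + b)² / (β(a + b)a - 1)` of the chain. -/
inductive KSBChain : ℕ → ℕ → ℕ → List ℤ → Prop
  | four : KSBChain 1 1 1 [4]
  | threes (k : ℕ) : KSBChain (k + 2) 1 1 (3 :: (List.replicate k 2 ++ [3]))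
  | consTwo {β a b : ℕ} {l : List ℤ} {x : ℤ} :
      KSBChain β a b (l ++ [x]) → KSBChain β (a + b) b (2 :: (l ++ [x + 1]))
  | concatTwo {β a b : ℕ} {x : ℤ} {l : List ℤ} :
      KSBChain β a b (x :: l) → KSBChain β a (a + b) ((x + 1) :: (l ++ [2]))

lemma coprime_euclid_induction {P : ℕ → ℕ → Prop} (one_one : P 1 1)
    (add_left : ∀ a b, P a b → P (a + b) b) (add_right : ∀ a b, P a b → P a (a + b))
    {a b : ℕ} (ha : 0 < a) (hb : 0 < b) (hab : a.Coprime b) : P a b := by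
  induction hs : a + b using Nat.strong_induction_on generalizing a b with
  | _ s ih =>
    subst hs
    rcases lt_trichotomy a b with hlt | rfl | hlt
    · obtain ⟨c, rfl⟩ := Nat.exists_eq_add_of_le hlt.le
      exact add_right a c
        (ih (a + c) (by lia) ha (by lia) (Nat.coprime_self_add_right.1 hab) rfl)
    · obtain rfl : a = 1 := (Nat.coprime_self a).1 hab
      exact one_one
    · obtain ⟨c, rfl⟩ := Nat.exists_eq_add_of_le' hlt.le
      exact add_left c b
        (ih (c + b) (by lia) (by lia) hb (Nat.coprime_add_self_left.1 hab) rfl)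

namespace KSBChain

variable {β a b : ℕ} {L : List ℤ}

lemma indices_pos (h : KSBChain β a b L) : 0 < β ∧ 0 < a ∧ 0 < b := by
  induction h <;> lia

lemma ne_nil (h : KSBChain β a b L) : L ≠ [] := by
  cases h <;> simp

lemma two_le (h : KSBChain β a b L) : ∀ x ∈ L, 2 ≤ x := by
  induction h with
  | four => simp
  | threes k => simp +contextual [or_imp]
  | consTwo _ ih | concatTwo _ ih =>
    simp only [List.forall_mem_cons, List.forall_mem_append] at ih ⊢
    grind

lemma sum_eq (h : KSBChain β a b L) : L.sum = 3 * L.length + 2 - β := by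
  induction h with
  | four => simp
  | threes k =>
    simp only [List.sum_cons, List.sum_append, List.sum_replicate, List.sum_nil, List.length_cons,
      List.length_append, List.length_replicate, List.length_nil, nsmul_eq_mul]
    push_cast
    ring
  | consTwo _ ih | concatTwo _ ih =>
    simp only [List.sum_cons, List.sum_append, List.sum_nil, List.length_cons, List.length_append,
      List.length_nil] at ih ⊢
    lia

lemma add_le_length_of_replicate_prefix (h : KSBChain β a b L) {s : ℕ}
    (hs : List.replicate s 2 <+: L) : β + s ≤ L.length := by
  induction h generalizing s with
  | four | threes _ => cases s <;> simp_all [List.replicate_succ]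
  | concatTwo h ih =>
    have hlen := ih (s := 0) List.nil_prefix
    have hhead := h.two_le _ List.mem_cons_self
    cases s with
    | zero =>
      simp only [List.length_cons, List.length_append, List.length_nil] at hlen ⊢
      lia
    | succ s =>
      rw [List.replicate_succ, List.cons_prefix_cons] at hs
      lia
  | @consTwo β _ _ l x h ih =>
    have hlast : 2 ≤ x := h.two_le x (by simp)
    suffices β + (s - 1) ≤ (l ++ [x]).length by
      simp only [List.length_cons, List.length_append, List.length_nil] at this ⊢
      lia
    cases s with
    | zero => exact ih List.nil_prefix
    | succ s =>
      rw [List.replicate_succ, List.cons_prefix_cons, List.prefix_concat_iff] at hs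
      -- The run of `2`s stays inside `l` because the last entry `x + 1` is greater than `2`.
      rcases hs.2 with hall | hpre
      · have hmem : x + 1 ∈ List.replicate s (2 : ℤ) := by simp [hall]
        have := List.eq_of_mem_replicate hmem
        lia
      · exact ih (hpre.trans (List.prefix_append l [x]))

lemma hjMatrix_map_intCast (h : KSBChain β a b L) :
    hjMatrix (L.map (↑)) =
      !![(β * (a + b) ^ 2 : ℚ), 1 - β * (a + b) * b; β * (a + b) * a - 1, 1 - β * a * b] := by
  induction h with
  | four => norm_num [hjMatrix_singleton]
  | threes k =>
    have hsplit : (3 :: (List.replicate k 2 ++ [3]) : List ℤ).map (↑) =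
        [(3 : ℚ)] ++ (List.replicate k 2 ++ [3]) := by
      simp
    rw [hsplit, hjMatrix_append, hjMatrix_append, hjMatrix_replicate_two, hjMatrix_singleton,
      Matrix.mul_fin_two, Matrix.mul_fin_two]
    ext i j
    fin_cases i <;> fin_cases j <;> simp <;> ring
  | @consTwo _ _ _ l x _ ih =>
    have hmul : hjMatrix ((2 :: (l ++ [x + 1])).map (↑)) =
        !![2, -1; 1, 0] * (hjMatrix ((l ++ [x]).map (↑)) * !![1, 0; -1, 1]) := by
      simp only [List.map_cons, List.map_append, List.map_nil, Int.cast_add, Int.cast_one,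
        Int.cast_ofNat, hjMatrix_cons 2, hjMatrix_concat_add_one]
    rw [hmul, ih, Matrix.mul_fin_two, Matrix.mul_fin_two]
    ext i j
    fin_cases i <;> fin_cases j <;> simp <;> ring
  | @concatTwo _ _ _ x l _ ih =>
    have hmul : hjMatrix (((x + 1) :: (l ++ [2])).map (↑)) =
        !![1, 1; 0, 1] * (hjMatrix ((x :: l).map (↑)) * !![2, -1; 1, 0]) := by
      simp only [List.map_cons, List.map_append, List.map_nil, Int.cast_add, Int.cast_one,
        Int.cast_ofNat, hjMatrix_add_one_cons, ← hjMatrix_singleton 2, ← hjMatrix_append,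
        List.cons_append]
    rw [hmul, ih, Matrix.mul_fin_two, Matrix.mul_fin_two]
    ext i j
    fin_cases i <;> fin_cases j <;> simp <;> ring

lemma hj_map_intCast (h : KSBChain β a b L) :
    hj (L.map (↑)) = β * (a + b) ^ 2 / (β * (a + b) * a - 1) := by
  obtain ⟨hβ, ha, -⟩ := h.indices_pos
  have hnum : hjMatrix (L.map (↑)) 0 0 ≠ 0 := by
    suffices (β * (a + b) ^ 2 : ℚ) ≠ 0 by simpa [h.hjMatrix_map_intCast]
    positivity
  rw [hj_eq_hjMatrix_div (two_le_of_mem_map_intCast h.two_le) hnum, h.hjMatrix_map_intCast]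
  simp

lemma exists_of_coprime (hβ : 0 < β) (ha : 0 < a) (hb : 0 < b) (hab : a.Coprime b) :
    ∃ L, KSBChain β a b L := by
  refine coprime_euclid_induction (P := fun a b ↦ ∃ L, KSBChain β a b L) ?_ ?_ ?_ ha hb hab
  · obtain rfl | ⟨k, rfl⟩ : β = 1 ∨ ∃ k, β = k + 2 := by
      rcases β with _ | _ | k <;> simp_all
    · exact ⟨_, four⟩
    · exact ⟨_, threes k⟩
  · rintro a b ⟨L, hL⟩
    rw [← List.dropLast_append_getLast hL.ne_nil] at hL
    exact ⟨_, hL.consTwo⟩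
  · rintro a b ⟨L, hL⟩
    obtain ⟨x, l, rfl⟩ := List.exists_cons_of_ne_nil hL.ne_nil
    exact ⟨_, hL.concatTwo⟩

end KSBChain

lemma dvd_of_mul_dvd_mul_sq {m a g : ℕ} (hg : 0 < g) (hma : m.Coprime a)
    (h : m * g ∣ (a * g) ^ 2) : m ∣ g := by
  have hmul : m * g ∣ a ^ 2 * g * g := by
    convert h using 1
    ring
  exact (hma.pow_right 2).dvd_of_dvd_mul_left (Nat.dvd_of_mul_dvd_mul_right hg hmul)

namespace IsTFraction

variable {n q : ℕ}

lemma exists_eq_mul_sq (hT : IsTFraction n q) :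
    ∃ β a b : ℕ, 0 < β ∧ 0 < a ∧ 0 < b ∧ a.Coprime b ∧
      n = β * (a + b) ^ 2 ∧ q + 1 = β * (a + b) * a ∧ (β : ℚ) = Tbeta n q := by
  obtain ⟨-, hqn, -, hdvd, hne⟩ := hT
  obtain ⟨m, a, hma, hn, hqa⟩ := Nat.exists_coprime n (q + 1)
  rw [← Tg] at hn hqa
  have hg : 0 < Tg n q := Nat.gcd_pos_of_pos_right n q.succ_pos
  obtain ⟨β, hβ⟩ : m ∣ Tg n q := dvd_of_mul_dvd_mul_sq hg hma (by rwa [← hn, ← hqa])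
  have ha : 0 < a := Nat.pos_of_mul_pos_right (by lia : 0 < a * Tg n q)
  have ham : a < m := lt_of_mul_lt_mul_right (by lia : a * Tg n q < m * Tg n q) hg.le
  obtain ⟨b, rfl⟩ := Nat.exists_eq_add_of_le ham.le
  have hβpos : 0 < β := Nat.pos_of_mul_pos_left (hβ ▸ hg)
  rw [hβ] at hn hqa
  refine ⟨β, a, b, hβpos, ha, by lia, ?_, ?_, ?_, ?_⟩
  · exact (Nat.coprime_add_self_left.1 (Nat.add_comm a b ▸ hma)).symm
  · rw [hn]
    ring
  · rw [hqa]
    ring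
  · rw [Tbeta, hβ, hn]
    push_cast
    field_simp

lemma exists_ksbChain (hT : IsTFraction n q) {L : List ℤ} (hL : ∀ x ∈ L, 2 ≤ x)
    (hval : hj (L.map (↑)) = n / q) :
    ∃ β a b : ℕ, (β : ℚ) = Tbeta n q ∧ KSBChain β a b L := by
  obtain ⟨β, a, b, hβ, ha, hb, hab, hn, hq, hTbeta⟩ := hT.exists_eq_mul_sq
  obtain ⟨L', hL'⟩ := KSBChain.exists_of_coprime hβ ha hb hab
  have hn_cast : (n : ℚ) = β * (a + b) ^ 2 := mod_cast hn
  have hq_cast : (q : ℚ) = β * (a + b) * a - 1 := eq_sub_of_add_eq (mod_cast hq)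
  obtain rfl : L = L' := hj_map_intCast_injOn hL hL'.two_le <| by
    simp only [hval, hL'.hj_map_intCast, hn_cast, hq_cast]
  exact ⟨β, a, b, hTbeta, hL'⟩

end IsTFraction

theorem tchain_tail_sum_general {L : List ℤ} {n q s : ℕ} (hL : ∀ x ∈ L, 2 ≤ x)
    (hT : IsTFraction n q) (hval : hj (L.map (↑)) = n / q) (hs : 1 ≤ s)
    (htwos : L.take s = List.replicate s 2) :
    ∃ β : ℕ, 0 < β ∧ (β : ℚ) = Tbeta n q ∧
      β + s ≤ L.length ∧
      (L.drop s).sum = 3 * (L.length : ℤ) + 2 - (β : ℤ) - 2 * (s : ℤ) ∧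
      (L.length : ℤ) + (β : ℤ) + 2 ≤ (L.drop s).sum ∧
      5 ≤ (L.drop s).sum := by
  obtain ⟨β, a, b, hTbeta, hchain⟩ := hT.exists_ksbChain hL hval
  have hβ : 0 < β := hchain.indices_pos.1
  have hlen : β + s ≤ L.length :=
    hchain.add_le_length_of_replicate_prefix (htwos ▸ List.take_prefix s L)
  have hsum : 2 * s + (L.drop s).sum = 3 * L.length + 2 - β := by
    rw [← hchain.sum_eq, ← List.sum_take_add_sum_drop L s, htwos]
    simp [mul_comm]
  exact ⟨β, hβ, hTbeta, hlen, by lia, by lia, by lia⟩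

/-- Let `[a_1,…,a_r]` be a T-chain with Hirzebruch–Jung value `n/q`, and suppose
`a_1 = ⋯ = a_s = 2` and `a_{s+1} > 2` for some `1 ≤ s < r`. Then `β(n/q) + s ≤ r`
and `a_{s+1} + ⋯ + a_r = 3r + 2 − β(n/q) − 2s ≥ r + β(n/q) + 2 ≥ 5`. -/
theorem tchain_tail_sum (L : List ℤ) (n q s : ℕ) (hL2 : ∀ a ∈ L, 2 ≤ a)
    (hT : IsTFraction n q)
    (hval : hj (L.map (fun a => (a : ℚ))) = (n : ℚ) / (q : ℚ))
    (hs1 : 1 ≤ s) (hsr : s < L.length)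
    (htwos : L.take s = List.replicate s 2) (hnext : 2 < L.getD s 0) :
    ∃ β : ℕ, 0 < β ∧ (β : ℚ) = Tbeta n q ∧
      β + s ≤ L.length ∧
      (L.drop s).sum = 3 * (L.length : ℤ) + 2 - (β : ℤ) - 2 * (s : ℤ) ∧
      (L.length : ℤ) + (β : ℤ) + 2 ≤ (L.drop s).sum ∧
      5 ≤ (L.drop s).sum :=
  -- The map in `hval` elaborates to the identity on a monadic lift of `L`, not to `Int.cast`.
  tchain_tail_sum_general hL2 hT (by simpa [List.map_eq_flatMap] using hval) hs1 htwos
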